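/- There is a dense G_δ subset Q of C_λ such that for each f ∈ Q there exists a set X_f ⊆ I of Lebesgue measure 1 with: f restricted to X_f is a bijection of X_f onto itself, and λ(M) = λ(M ∩ X_f) = λ(f⁻¹(M ∩ X_f)) for every Borel set M ⊆ I. -/

import Mathlib

open MeasureTheory Set
open scoped ENNReal

/-- `C_λ`: continuous maps of `[0,1]` preserving Lebesgue measure, with the uniform metric. -/
abbrev CLam : Type := {f : C(unitInterval, unitInterval) // MeasurePreserving f volume volume}

/-!
It suffices that the generic `f` is injective on a conull set `s`: if `Y` is the set of points whose
whole forward orbit lies in `s`, then `f` maps `⋂ n, f^[n] '' Y` bijectively onto itself, and this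
set is conull because `f` preserves the measure.

For almost everywhere injectivity it is enough that, for each `t` in a countable dense set, `f` maps
almost all of `[0,t]` and almost all of `[t,1]` to disjoint sets. Up to an error `2⁻ⁿ` this can be
witnessed by compact sets, so it is an open condition, and the errors are removed by Borel–Cantelli.

For density, cut `I` into short cells with `f t` among the endpoints, and let `μ₁`, `μ₂` be the
images under `f` of Lebesgue measure on `[0,t]` and on `[t,1]`, so that `μ₁ + μ₂` is Lebesgue
measure. Divide each cell into two parts of masses `μ₁(cell)` and `μ₂(cell)`, and compose `f` on
`[0,t]` and on `[t,1]` with two monotone maps which fix the endpoints (so the two compositions agree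
at `t`) and transport `μ₁`, `μ₂` to Lebesgue measure on the respective parts. Such a map can only be
continuous if its target charges every interval inside the cells of positive mass; therefore a small
fraction of the mass is spread uniformly over each cell.
-/

open scoped unitInterval symmDiff

section Quantile

variable {α : Type*} [LinearOrder α] [TopologicalSpace α] [OrderTopology α]
  [MeasurableSpace α] [BorelSpace α]

lemma continuous_measure_Iic [SecondCountableTopology α] (μ : Measure α) [IsFiniteMeasure μ]
    [NullSingletonClass μ] : Continuous fun y => μ (Iic y) := by
  refine continuous_iff_continuousAt.2 fun y =>
    tendsto_measure_of_ae_tendsto_indicator_of_isFiniteMeasure _ measurableSet_Iic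
      (fun _ => measurableSet_Iic) ?_
  filter_upwards [compl_mem_ae_iff.2 (measure_singleton y)] with x (hx : x ≠ y)
  rcases hx.lt_or_gt with hxy | hyx
  · filter_upwards [Ioi_mem_nhds hxy] with z (hz : x < z)
    simp [hxy.le, hz.le]
  · filter_upwards [Iio_mem_nhds hyx] with z (hz : z < x)
    simp [hyx.not_ge, hz.not_ge]

lemma strictMono_measure_Iic [DenselyOrdered α] (μ : Measure α) [IsFiniteMeasure μ]
    [μ.IsOpenPosMeasure] : StrictMono fun y => μ (Iic y) := by
  intro y z hyz
  have hpos : 0 < μ (Ioc y z) :=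
    (isOpen_Ioo.measure_pos μ (nonempty_Ioo.2 hyz)).trans_le (measure_mono Ioo_subset_Ioc_self)
  calc μ (Iic y) < μ (Iic y) + μ (Ioc y z) :=
        ENNReal.lt_add_right (measure_ne_top μ _) hpos.ne'
    _ = μ (Iic z) := by
        rw [← measure_union (Iic_disjoint_Ioc le_rfl) measurableSet_Ioc,
          Iic_union_Ioc_eq_Iic hyz.le]

variable [SecondCountableTopology α] [BoundedOrder α] [PreconnectedSpace α]

lemma exists_measure_Iic_eq (μ : Measure α) [IsFiniteMeasure μ] [NullSingletonClass μ]
    {c : ℝ≥0∞} (hc : c ≤ μ univ) : ∃ y, μ (Iic y) = c := by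
  refine intermediate_value_univ ⊥ ⊤ (continuous_measure_Iic μ) ⟨?_, ?_⟩
  · simp
  · simpa using hc

variable [CompactSpace α]

lemma measure_setOf_measure_Iic_le (μ : Measure α) [IsFiniteMeasure μ] [NullSingletonClass μ]
    {c : ℝ≥0∞} (hc : c ≤ μ univ) : μ {y | μ (Iic y) ≤ c} = c := by
  obtain ⟨y₀, hy₀⟩ := exists_measure_Iic_eq μ hc
  have hcompact : IsCompact {y | μ (Iic y) ≤ c} :=
    (isClosed_le (continuous_measure_Iic μ) continuous_const).isCompact
  obtain ⟨y₁, hy₁, hmax⟩ := hcompact.exists_isGreatest ⟨y₀, hy₀.le⟩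
  have hIic : {y | μ (Iic y) ≤ c} = Iic y₁ :=
    Subset.antisymm (fun y hy => hmax hy) fun y (hy : y ≤ y₁) =>
      (measure_mono (Iic_subset_Iic.2 hy)).trans hy₁
  rw [hIic]
  exact le_antisymm hy₁ (hy₀ ▸ measure_mono (Iic_subset_Iic.2 (hmax hy₀.le)))

theorem exists_monotone_map_eq [DenselyOrdered α] (μ ν : Measure α) [IsFiniteMeasure μ]
    [IsFiniteMeasure ν] [NullSingletonClass μ] [NullSingletonClass ν] [ν.IsOpenPosMeasure]
    (huniv : μ univ = ν univ) :
    ∃ φ : α → α, Continuous φ ∧ Monotone φ ∧ μ.map φ = ν ∧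
      ∀ y, μ (Iic y) = ν (Iic y) → φ y = y := by
  have hν := strictMono_measure_Iic ν
  have hex : ∀ y, ∃ z, ν (Iic z) = μ (Iic y) := fun y =>
    exists_measure_Iic_eq ν (huniv ▸ measure_mono (subset_univ _))
  choose φ hφ using hex
  have hφc : Continuous φ := by
    have hemb := ((continuous_measure_Iic ν).isClosedEmbedding hν.injective).isEmbedding
    simpa only [hemb.continuous_iff, Function.comp_def, hφ] using continuous_measure_Iic μ
  refine ⟨φ, hφc, fun y z hyz => ?_, ?_, fun y hy => hν.injective ((hφ y).trans hy)⟩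
  · simpa only [← hν.le_iff_le, hφ] using measure_mono (Iic_subset_Iic.2 hyz)
  · have : IsFiniteMeasure (μ.map φ) := Measure.isFiniteMeasure_map μ φ
    refine Measure.ext_of_Iic _ _ fun z => ?_
    have hpre : φ ⁻¹' Iic z = {y | μ (Iic y) ≤ ν (Iic z)} := by
      ext y
      rw [mem_preimage, mem_Iic, mem_ofPred_eq, ← hφ y, hν.le_iff_le]
    rw [Measure.map_apply hφc.measurable measurableSet_Iic, hpre]
    exact measure_setOf_measure_Iic_le μ (huniv ▸ measure_mono (subset_univ _))

end Quantile

lemma nullSingletonClass_of_absolutelyContinuous {α : Type*} [MeasurableSpace α]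
    {μ ν : Measure α} [NullSingletonClass ν] (h : μ ≪ ν) : NullSingletonClass μ :=
  ⟨fun x => h (measure_singleton x)⟩

instance isOpenPosMeasure_volume_unitInterval : (volume : Measure I).IsOpenPosMeasure where
  open_pos U hU hne h0 := by
    obtain ⟨a, b, hab, hsub⟩ := hU.exists_Ioo_subset hne
    have hIoo := measure_mono_null hsub h0
    rw [unitInterval.volume_Ioo, ENNReal.ofReal_eq_zero, sub_nonpos] at hIoo
    exact hab.not_ge hIoo

theorem exists_monotone_map_eq_of_support {μ ν : Measure I} [IsFiniteMeasure μ] [IsFiniteMeasure ν]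
    (hμ : μ ≪ volume) (hν : ν ≪ volume) (huniv : μ univ = ν univ)
    (hsupp : ∀ y ∉ ν.support, μ (Iic y) = ν (Iic y)) :
    ∃ φ : I → I, Continuous φ ∧ Monotone φ ∧ μ.map φ = ν ∧
      ∀ y, μ (Iic y) = ν (Iic y) → φ y = y := by
  -- Adding `θ` to both sides makes the target positive on open sets; `φ` is the identity where `θ`
  -- lives, so `θ` can be cancelled again.
  set θ : Measure I := volume.restrict ν.supportᶜ
  have hθ : θ ≪ volume := Measure.absolutelyContinuous_of_le Measure.restrict_le_self
  have : NullSingletonClass (μ + θ) := nullSingletonClass_of_absolutelyContinuous (hμ.add_left hθ)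
  have : NullSingletonClass (ν + θ) := nullSingletonClass_of_absolutelyContinuous (hν.add_left hθ)
  have : (ν + θ).IsOpenPosMeasure := by
    refine ⟨fun U hU hne h0 => hU.measure_ne_zero volume hne ?_⟩
    obtain ⟨hνU, hθU : volume.restrict ν.supportᶜ U = 0⟩ : ν U = 0 ∧ θ U = 0 := by
      simpa only [Measure.add_apply, add_eq_zero] using h0
    rwa [Measure.restrict_apply hU.measurableSet,
      inter_eq_left.2 (Measure.subset_compl_support_of_isOpen hU hνU)] at hθU
  obtain ⟨φ, hφc, hφm, hmap, hfix⟩ := exists_monotone_map_eq (μ + θ) (ν + θ) (by simp [huniv])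
  replace hfix : ∀ y, μ (Iic y) = ν (Iic y) → φ y = y := fun y hy => hfix y (by simp [hy])
  have hθφ : θ.map φ = θ := by
    have : φ =ᵐ[θ] id := ae_restrict_of_forall_mem Measure.isOpen_compl_support.measurableSet
      fun y hy => hfix y (hsupp y hy)
    rw [Measure.map_congr this, Measure.map_id]
  rw [Measure.map_add _ _ hφc.measurable, hθφ, Measure.add_left_inj] at hmap
  exact ⟨φ, hφc, hφm, hmap, hfix⟩

/-- A countable subdivision of `[0,1)` into consecutive half-open cells. Indexing the points by `ℤ`
lets a prescribed interior point be `point 0` without choosing how many cells lie on either side;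
cells may be empty, and the subdivision points need not contain `0` or `1`. -/
structure Subdivision where
  point : ℤ → I
  monotone_point : Monotone point
  exists_mem_Ico : ∀ y < 1, ∃ k, y ∈ Ico (point k) (point (k + 1))

lemma Subdivision.exists_point_eq_of_mesh_le (c : I) {h : ℝ} (hh : 0 < h) :
    ∃ e : Subdivision, e.point 0 = c ∧ ∀ k, (e.point (k + 1) : ℝ) - e.point k ≤ h := by
  have hmono : Monotone fun k : ℤ => projIcc (0 : ℝ) 1 zero_le_one (c + k * h) :=
    fun i j hij => monotone_projIcc _ (by gcongr)
  refine ⟨⟨fun k => projIcc 0 1 zero_le_one (c + k * h), hmono, fun y hy => ?_⟩, by simp,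
    fun k => (le_abs_self _).trans ?_⟩
  · have hfloor := Int.floor_le ((y - c : ℝ) / h)
    have hlt_floor := Int.lt_floor_add_one ((y - c : ℝ) / h)
    rw [le_div_iff₀ hh] at hfloor
    rw [div_lt_iff₀ hh] at hlt_floor
    refine ⟨⌊(y - c : ℝ) / h⌋, ?_, ?_⟩
    · rw [← Subtype.coe_le_coe, coe_projIcc]
      exact max_le y.2.1 ((min_le_right _ _).trans (by linarith))
    · rw [← Subtype.coe_lt_coe, coe_projIcc]
      exact lt_max_of_lt_right (lt_min hy (by push_cast; linarith))
  · refine (abs_projIcc_sub_projIcc zero_le_one).trans_eq ?_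
    push_cast
    rw [show (c + (k + 1) * h - (c + k * h) : ℝ) = h by ring, abs_of_pos hh]

namespace Subdivision

variable (e : Subdivision)

/-- The `k`-th cell of a subdivision. -/
def cell (k : ℤ) : Set I := Ico (e.point k) (e.point (k + 1))

lemma measurableSet_cell (k : ℤ) : MeasurableSet (e.cell k) := measurableSet_Ico

lemma pairwise_disjoint_cell : Pairwise (Function.onFun Disjoint e.cell) :=
  e.monotone_point.pairwise_disjoint_on_Ico_succ

lemma iUnion_cell : ⋃ k, e.cell k = Iio 1 := by
  refine Subset.antisymm (iUnion_subset fun k y hy => hy.2.trans_le le_top) fun y hy => ?_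
  exact mem_iUnion.2 (e.exists_mem_Ico y hy)

lemma biUnion_cell_Iio (k : ℤ) : ⋃ j ∈ Iio k, e.cell j = Iio (e.point k) := by
  refine Subset.antisymm (iUnion₂_subset fun j hj y hy =>
    hy.2.trans_le (e.monotone_point (Order.add_one_le_of_lt hj))) fun y hy => ?_
  obtain ⟨j, hj⟩ := e.exists_mem_Ico y (lt_of_lt_of_le hy le_top)
  exact mem_iUnion₂.2 ⟨j, e.monotone_point.reflect_lt (hj.1.trans_lt hy), hj⟩

section EqualMasses

variable {e} {μ ν : Measure I}

lemma measure_biUnion_cell_congr (h : ∀ k, μ (e.cell k) = ν (e.cell k)) (s : Set ℤ) :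
    μ (⋃ k ∈ s, e.cell k) = ν (⋃ k ∈ s, e.cell k) := by
  have hdisj : s.PairwiseDisjoint e.cell := e.pairwise_disjoint_cell.set_pairwise s
  rw [measure_biUnion s.to_countable hdisj fun k _ => e.measurableSet_cell k,
    measure_biUnion s.to_countable hdisj fun k _ => e.measurableSet_cell k]
  simp only [h]

lemma measure_Iio_point_congr (h : ∀ k, μ (e.cell k) = ν (e.cell k)) (k : ℤ) :
    μ (Iio (e.point k)) = ν (Iio (e.point k)) := by
  simpa only [biUnion_cell_Iio] using measure_biUnion_cell_congr h (Iio k)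

lemma measure_univ_congr [NullSingletonClass μ] [NullSingletonClass ν]
    (h : ∀ k, μ (e.cell k) = ν (e.cell k)) : μ univ = ν univ := by
  have hIio : μ (Iio 1) = ν (Iio 1) := by
    simpa only [biUnion_univ, iUnion_cell] using measure_biUnion_cell_congr h univ
  have huniv : (univ : Set I) = Iic 1 := Iic_top.symm
  rwa [huniv, ← measure_congr Iio_ae_eq_Iic, ← measure_congr Iio_ae_eq_Iic]

lemma measure_Iic_eq_of_measure_cell_eq_zero {k : ℤ} {y : I} (hy : y ∈ e.cell k)
    (h0 : μ (e.cell k) = 0) : μ (Iic y) = μ (Iio (e.point k)) := by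
  refine le_antisymm ?_ (measure_mono (Iio_subset_Iic hy.1))
  have hsub : Iic y ⊆ Iio (e.point k) ∪ e.cell k := fun z hz =>
    (lt_or_ge z (e.point k)).imp_right fun hkz => ⟨hkz, hz.trans_lt hy.2⟩
  calc μ (Iic y) ≤ μ (Iio (e.point k)) + μ (e.cell k) :=
        (measure_mono hsub).trans (measure_union_le _ _)
    _ = μ (Iio (e.point k)) := by rw [h0, add_zero]

theorem exists_monotone_map_eq [IsFiniteMeasure μ] [IsFiniteMeasure ν]
    (hμ : μ ≪ volume) (hν : ν ≪ volume) (h : ∀ k, μ (e.cell k) = ν (e.cell k))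
    (hsupp : ∀ k, μ (e.cell k) ≠ 0 → e.cell k ⊆ ν.support) :
    ∃ φ : I → I, Continuous φ ∧ Monotone φ ∧ μ.map φ = ν ∧ ∀ k, φ (e.point k) = e.point k := by
  have := nullSingletonClass_of_absolutelyContinuous hμ
  have := nullSingletonClass_of_absolutelyContinuous hν
  have huniv : μ univ = ν univ := measure_univ_congr h
  obtain ⟨φ, hφc, hφm, hmap, hfix⟩ :=
    exists_monotone_map_eq_of_support hμ hν huniv fun y hy => by
      rcases eq_or_lt_of_le (unitInterval.le_one' : y ≤ 1) with rfl | hy1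
      · rwa [show Iic (1 : I) = univ from Iic_top]
      · obtain ⟨k, hk⟩ := e.exists_mem_Ico y hy1
        have hμ0 : μ (e.cell k) = 0 := not_not.1 fun hne => hy (hsupp k hne hk)
        rw [measure_Iic_eq_of_measure_cell_eq_zero hk hμ0,
          measure_Iic_eq_of_measure_cell_eq_zero hk (h k ▸ hμ0), measure_Iio_point_congr h]
  refine ⟨φ, hφc, hφm, hmap, fun k => hfix _ ?_⟩
  rw [← measure_congr Iio_ae_eq_Iic, ← measure_congr Iio_ae_eq_Iic, measure_Iio_point_congr h]

end EqualMasses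

lemma dist_le_of_monotone {φ : I → I} (hφ : Monotone φ) (hfix : ∀ k, φ (e.point k) = e.point k)
    {h : ℝ} (hmesh : ∀ k, (e.point (k + 1) : ℝ) - e.point k ≤ h) (hh : 0 ≤ h) (y : I) :
    dist (φ y) y ≤ h := by
  rcases eq_or_lt_of_le (unitInterval.le_one' : y ≤ 1) with rfl | hy
  · have hone : φ 1 = 1 := by
      refine le_antisymm le_top (le_of_forall_lt fun z hz => ?_)
      obtain ⟨k, hk⟩ := e.exists_mem_Ico z hz
      exact hk.2.trans_le (hfix (k + 1) ▸ hφ le_top)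
    rwa [hone, dist_self]
  · obtain ⟨k, hk⟩ := e.exists_mem_Ico y hy
    have hφy : φ y ∈ Icc (e.point k) (e.point (k + 1)) :=
      ⟨hfix k ▸ hφ hk.1, hfix (k + 1) ▸ hφ hk.2.le⟩
    exact (Real.dist_le_of_mem_Icc hφy (Ico_subset_Icc_self hk)).trans (hmesh k)

lemma exists_measurableSet_volume_inter_cell {m : ℤ → ℝ≥0∞}
    (hm : ∀ k, m k ≤ volume (e.cell k)) :
    ∃ A, MeasurableSet A ∧ ∀ k, volume (A ∩ e.cell k) = m k := by
  have hex : ∀ k, ∃ z, volume (Iic z ∩ e.cell k) = m k := fun k => by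
    obtain ⟨z, hz⟩ := exists_measure_Iic_eq (volume.restrict (e.cell k))
      ((hm k).trans_eq (Measure.restrict_apply_univ _).symm)
    exact ⟨z, by rwa [Measure.restrict_apply measurableSet_Iic] at hz⟩
  choose z hz using hex
  refine ⟨⋃ k, Iic (z k) ∩ e.cell k,
    .iUnion fun k => measurableSet_Iic.inter (e.measurableSet_cell k), fun k => ?_⟩
  rw [← hz k]
  congr 1
  ext y
  simp only [mem_inter_iff, mem_iUnion]
  refine ⟨fun ⟨⟨j, hzj, hyj⟩, hyk⟩ => ?_, fun hy => ⟨⟨k, hy⟩, hy.2⟩⟩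
  obtain rfl : j = k := e.pairwise_disjoint_cell.eq (not_disjoint_iff.2 ⟨y, hyj, hyk⟩)
  exact ⟨hzj, hyk⟩

/-- The measure with the same mass as `μ` on each cell, spread uniformly over the cell: the
conditional expectation of `μ` on the partition into cells. A cell which is null for `volume`
contributes nothing. -/
noncomputable def cellAverage (μ : Measure I) : Measure I :=
  Measure.sum fun k => μ (e.cell k) • ProbabilityTheory.cond volume (e.cell k)

lemma cellAverage_apply_cell {μ : Measure I} (hμ : μ ≪ volume) (k : ℤ) :
    e.cellAverage μ (e.cell k) = μ (e.cell k) := by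
  have hoff : ∀ j ≠ k, μ (e.cell j) * ProbabilityTheory.cond volume (e.cell j) (e.cell k) = 0 :=
    fun j hj => by
      rw [ProbabilityTheory.cond_apply (e.measurableSet_cell j),
        (e.pairwise_disjoint_cell hj).inter_eq, measure_empty, mul_zero, mul_zero]
  rw [cellAverage, Measure.sum_apply _ (e.measurableSet_cell k)]
  simp only [Measure.smul_apply, smul_eq_mul]
  rw [tsum_eq_single k hoff]
  by_cases h0 : volume (e.cell k) = 0
  · rw [hμ h0, zero_mul]
  · rw [ProbabilityTheory.cond_apply_self h0 (measure_ne_top _ _), mul_one]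

lemma cellAverage_add (μ ν : Measure I) :
    e.cellAverage (μ + ν) = e.cellAverage μ + e.cellAverage ν := by
  simp only [cellAverage, Measure.sum_add_sum, Measure.add_apply, add_smul]

lemma cellAverage_volume : e.cellAverage volume = volume := by
  have hcell : ∀ k, volume (e.cell k) • ProbabilityTheory.cond volume (e.cell k) =
      volume.restrict (e.cell k) := fun k => by
    by_cases h0 : volume (e.cell k) = 0
    · rw [h0, zero_smul, Measure.restrict_eq_zero.2 h0]
    · rw [ProbabilityTheory.cond, smul_smul, ENNReal.mul_inv_cancel h0 (measure_ne_top _ _),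
        one_smul]
  have hIio : volume.restrict (Iio (1 : I)) = volume := by
    rw [Measure.restrict_congr_set Iio_ae_eq_Iic, show Iic (1 : I) = univ from Iic_top,
      Measure.restrict_univ]
  simp only [cellAverage, hcell]
  rw [← Measure.restrict_iUnion e.pairwise_disjoint_cell e.measurableSet_cell, iUnion_cell, hIio]

lemma cell_subset_support_cellAverage {μ : Measure I} {k : ℤ} (h0 : μ (e.cell k) ≠ 0) :
    e.cell k ⊆ (e.cellAverage μ).support := by
  intro y hy
  refine (Measure.mem_support_iff_forall y).2 fun U hU => ?_
  have hclosure : y ∈ closure (Ioo (e.point k) (e.point (k + 1))) := by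
    rw [closure_Ioo (hy.1.trans_lt hy.2).ne]
    exact Ico_subset_Icc_self hy
  have hpos : volume (e.cell k ∩ U) ≠ 0 := by
    obtain ⟨V, hVU, hV, hyV⟩ := mem_nhds_iff.1 hU
    have hne : (Ioo (e.point k) (e.point (k + 1)) ∩ V).Nonempty := by
      rw [inter_comm]
      exact mem_closure_iff.1 hclosure V hV hyV
    refine ((isOpen_Ioo.inter hV).measure_pos volume hne).trans_le ?_ |>.ne'
    exact measure_mono (inter_subset_inter Ioo_subset_Ico_self hVU)
  calc 0 < μ (e.cell k) * ProbabilityTheory.cond volume (e.cell k) U := by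
        rw [ProbabilityTheory.cond_apply (e.measurableSet_cell k)]
        exact ENNReal.mul_pos h0
          (mul_ne_zero (ENNReal.inv_ne_zero.2 (measure_ne_top _ _)) hpos)
    _ ≤ e.cellAverage μ U :=
        (ENNReal.le_tsum k).trans (Measure.le_sum_apply _ _)

lemma smul_restrict_add_smul_cellAverage_apply_cell {μ : Measure I} (hμ : μ ≪ volume) {A : Set I}
    (hA : ∀ k, volume (A ∩ e.cell k) = μ (e.cell k)) {a b : ℝ≥0∞} (hab : a + b = 1) (k : ℤ) :
    (a • volume.restrict A + b • e.cellAverage μ) (e.cell k) = μ (e.cell k) := by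
  simp only [Measure.add_apply, Measure.smul_apply, smul_eq_mul]
  rw [Measure.restrict_apply (e.measurableSet_cell k), inter_comm, hA,
    e.cellAverage_apply_cell hμ, ← add_mul, hab, one_mul]

lemma exists_monotone_map_eq_smul_restrict_add {μ : Measure I} (hμ : μ ≤ volume) {A : Set I}
    (hA : ∀ k, volume (A ∩ e.cell k) = μ (e.cell k)) {a b : ℝ≥0∞} (hab : a + b = 1) (hb : b ≠ 0)
    (hle : a • volume.restrict A + b • e.cellAverage μ ≤ volume) :
    ∃ φ : I → I, Continuous φ ∧ Monotone φ ∧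
      μ.map φ = a • volume.restrict A + b • e.cellAverage μ ∧
      ∀ k, φ (e.point k) = e.point k := by
  have hμac : μ ≪ volume := Measure.absolutelyContinuous_of_le hμ
  have := isFiniteMeasure_of_le volume hμ
  have := isFiniteMeasure_of_le volume hle
  refine exists_monotone_map_eq hμac (Measure.absolutelyContinuous_of_le hle)
    (fun k => (e.smul_restrict_add_smul_cellAverage_apply_cell hμac hA hab k).symm)
    fun k hk => (e.cell_subset_support_cellAverage hk).trans ?_
  rw [Measure.support_add]
  exact subset_union_of_subset_right
    (Measure.absolutelyContinuous_smul hb).support_mono _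

lemma volume_compl_inter_cell {μ₁ μ₂ : Measure I} (hadd : μ₁ + μ₂ = volume) {A : Set I}
    (hAm : MeasurableSet A) {k : ℤ} (hA : volume (A ∩ e.cell k) = μ₁ (e.cell k)) :
    volume (Aᶜ ∩ e.cell k) = μ₂ (e.cell k) := by
  have hsum : μ₁ (e.cell k) + volume (Aᶜ ∩ e.cell k) = μ₁ (e.cell k) + μ₂ (e.cell k) := by
    rw [← Measure.add_apply, hadd, ← hA, inter_comm A, inter_comm Aᶜ, ← sdiff_eq,
      measure_inter_add_sdiff _ hAm]
  exact (ENNReal.add_right_inj (hA ▸ measure_ne_top _ _)).1 hsum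

end Subdivision

theorem exists_near_id_map_add_map_eq_volume {μ₁ μ₂ : Measure I} (hadd : μ₁ + μ₂ = volume) (c : I)
    {h : ℝ} (hh : 0 < h) {ε : ℝ≥0∞} (hε : ε ≠ 0) :
    ∃ φ ψ : I → I, Continuous φ ∧ Continuous ψ ∧ (∀ y, dist (φ y) y ≤ h) ∧
      (∀ y, dist (ψ y) y ≤ h) ∧ φ c = ψ c ∧ μ₁.map φ + μ₂.map ψ = volume ∧
      ∃ A, MeasurableSet A ∧ μ₁.map φ Aᶜ ≤ ε ∧ μ₂.map ψ A ≤ ε := by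
  obtain ⟨e, hc, hmesh⟩ := Subdivision.exists_point_eq_of_mesh_le c hh
  have hμ₁ : μ₁ ≤ volume := hadd ▸ Measure.le_add_right le_rfl
  have hμ₂ : μ₂ ≤ volume := hadd ▸ Measure.le_add_left le_rfl
  obtain ⟨A, hAm, hA⟩ := e.exists_measurableSet_volume_inter_cell fun k => hμ₁ (e.cell k)
  obtain ⟨a, b, hab, hb, hbε⟩ : ∃ a b : ℝ≥0∞, a + b = 1 ∧ b ≠ 0 ∧ b ≤ ε :=
    ⟨1 - min ε 1, min ε 1, tsub_add_cancel_of_le (min_le_right _ _),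
      (lt_min (pos_iff_ne_zero.2 hε) one_pos).ne', min_le_left _ _⟩
  have havg : e.cellAverage μ₁ + e.cellAverage μ₂ = volume := by
    rw [← e.cellAverage_add, hadd, e.cellAverage_volume]
  have htarget : (a • volume.restrict A + b • e.cellAverage μ₁) +
      (a • volume.restrict Aᶜ + b • e.cellAverage μ₂) = volume := by
    rw [add_add_add_comm, ← smul_add, ← smul_add, Measure.restrict_add_restrict_compl hAm, havg,
      ← add_smul, hab, one_smul]
  obtain ⟨φ, hφc, hφm, hφ, hφfix⟩ := e.exists_monotone_map_eq_smul_restrict_add hμ₁ hA hab hb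
    (htarget.le.trans' (Measure.le_add_right le_rfl))
  obtain ⟨ψ, hψc, hψm, hψ, hψfix⟩ := e.exists_monotone_map_eq_smul_restrict_add hμ₂
    (fun k => e.volume_compl_inter_cell hadd hAm (hA k)) hab hb
    (htarget.le.trans' (Measure.le_add_left le_rfl))
  have hsmear : ∀ {ν : Measure I} {s : Set I}, ν ≤ volume → b * ν s ≤ ε := fun {ν s} hν =>
    (mul_le_of_le_one_right' ((hν s).trans prob_le_one)).trans hbε
  refine ⟨φ, ψ, hφc, hψc, e.dist_le_of_monotone hφm hφfix hmesh hh.le,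
    e.dist_le_of_monotone hψm hψfix hmesh hh.le, ?_, by rw [hφ, hψ, htarget], A, hAm, ?_, ?_⟩
  · rw [← hc, hφfix, hψfix]
  · simpa [hφ, Measure.restrict_apply hAm.compl] using
      hsmear (havg ▸ Measure.le_add_right le_rfl)
  · simpa [hψ, Measure.restrict_apply hAm] using
      hsmear (havg ▸ Measure.le_add_left le_rfl)

section AlmostSeparates

variable {α β : Type*} [TopologicalSpace α] [MeasurableSpace α]

/-- `f` maps compact subsets of `S` and of `T`, which together miss less than `ε` of the mass of
`μ`, to disjoint sets: a version of "`f` sends almost every point of `S` and almost every point of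
`T` to different points" which is stable under small perturbations of `f`. -/
def AlmostSeparates (μ : Measure α) (f : α → β) (S T : Set α) (ε : ℝ≥0∞) : Prop :=
  ∃ K ⊆ S, ∃ L ⊆ T, IsCompact K ∧ IsCompact L ∧ μ (K ∪ L)ᶜ < ε ∧ Disjoint (f '' K) (f '' L)

lemma isOpen_setOf_almostSeparates [TopologicalSpace β] [T2Space β] (μ : Measure α)
    (S T : Set α) (ε : ℝ≥0∞) : IsOpen {f : C(α, β) | AlmostSeparates μ f S T ε} := by
  refine isOpen_iff_mem_nhds.2 fun f ⟨K, hKS, L, hLT, hK, hL, hμ, hdisj⟩ => ?_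
  obtain ⟨U, V, hU, hV, hKU, hLV, hUV⟩ :=
    SeparatedNhds.of_isCompact_isCompact (hK.image f.continuous) (hL.image f.continuous) hdisj
  have hKopen := ContinuousMap.isOpen_setOfPred_mapsTo (X := α) hK hU
  have hLopen := ContinuousMap.isOpen_setOfPred_mapsTo (X := α) hL hV
  filter_upwards [hKopen.mem_nhds (mapsTo_iff_image_subset.2 hKU),
    hLopen.mem_nhds (mapsTo_iff_image_subset.2 hLV)] with g hgK hgL
  exact ⟨K, hKS, L, hLT, hK, hL, hμ, hUV.mono hgK.image_subset hgL.image_subset⟩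

lemma almostSeparates_of_measure_symmDiff_lt [CompactSpace α] [TopologicalSpace β] [T2Space β]
    [MeasurableSpace β] [OpensMeasurableSpace β] {μ : Measure α} {ν : Measure β}
    [IsFiniteMeasure ν] [ν.InnerRegularCompactLTTop] {f : α → β} (hf : MeasurePreserving f μ ν)
    (hfc : Continuous f) {S T : Set α} (hS : IsClosed S) (hT : IsClosed T) (hST : Sᶜ ⊆ T)
    {A : Set β} (hA : MeasurableSet A) {ε : ℝ≥0∞} (h : μ (S ∆ (f ⁻¹' A)) < ε) :
    AlmostSeparates μ f S T ε := by
  set δ := (ε - μ (S ∆ (f ⁻¹' A))) / 2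
  have hδ : δ ≠ 0 := (ENNReal.half_pos (tsub_pos_of_lt h).ne').ne'
  obtain ⟨C, hCA, hC, hCδ⟩ := hA.exists_isCompact_sdiff_lt (measure_ne_top ν _) hδ
  obtain ⟨D, hDA, hD, hDδ⟩ := hA.compl.exists_isCompact_sdiff_lt (measure_ne_top ν _) hδ
  refine ⟨S ∩ f ⁻¹' C, inter_subset_left, T ∩ f ⁻¹' D, inter_subset_left,
    (hS.inter (hC.isClosed.preimage hfc)).isCompact,
    (hT.inter (hD.isClosed.preimage hfc)).isCompact, ?_,
    (disjoint_compl_right.mono hCA hDA).mono (image_subset_iff.2 inter_subset_right)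
      (image_subset_iff.2 inter_subset_right)⟩
  have hsub : (S ∩ f ⁻¹' C ∪ T ∩ f ⁻¹' D)ᶜ ⊆
      S ∆ (f ⁻¹' A) ∪ (f ⁻¹' (A \ C) ∪ f ⁻¹' (Aᶜ \ D)) := by
    intro x hx
    have hxT : x ∉ S → x ∈ T := fun hxS => hST hxS
    simp only [mem_compl_iff, mem_union, mem_inter_iff, mem_preimage, mem_symmDiff,
      mem_sdiff] at hx ⊢
    tauto
  calc μ (S ∩ f ⁻¹' C ∪ T ∩ f ⁻¹' D)ᶜ
      ≤ μ (S ∆ (f ⁻¹' A)) + (μ (f ⁻¹' (A \ C)) + μ (f ⁻¹' (Aᶜ \ D))) :=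
        (measure_mono hsub).trans
          ((measure_union_le _ _).trans (by gcongr; exact measure_union_le _ _))
    _ < μ (S ∆ (f ⁻¹' A)) + (δ + δ) := by
        rw [hf.measure_preimage (hA.diff hC.measurableSet).nullMeasurableSet,
          hf.measure_preimage (hA.compl.diff hD.measurableSet).nullMeasurableSet]
        exact ENNReal.add_lt_add_left (h.ne_top) (ENNReal.add_lt_add hCδ hDδ)
    _ = ε := by rw [ENNReal.add_halves, add_tsub_cancel_of_le h.le]

lemma exists_mem_ae_forall_ne_of_almostSeparates {μ : Measure α} {f : α → β} {S T : Set α}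
    (h : ∀ n : ℕ, AlmostSeparates μ f S T (2⁻¹ ^ n)) :
    ∃ s ∈ ae μ, ∀ x ∈ s, x ∉ T → ∀ y ∈ s, y ∉ S → f x ≠ f y := by
  choose K hKS L hLT _ _ hμ hdisj using h
  have hsum : ∑' n, μ (K n ∪ L n)ᶜ ≠ ∞ := by
    refine ne_top_of_le_ne_top ?_ (ENNReal.tsum_le_tsum fun n => (hμ n).le)
    simp [ENNReal.tsum_geometric]
  refine ⟨_, ae_eventually_notMem hsum, fun x hx hxT y hy hyS hxy => ?_⟩
  obtain ⟨n, hxn, hyn⟩ := (Filter.Eventually.and hx hy).exists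
  have hxK : x ∈ K n := (not_not.1 hxn).resolve_right fun hxL => hxT (hLT n hxL)
  have hyL : y ∈ L n := (not_not.1 hyn).resolve_left fun hyK => hyS (hKS n hyK)
  exact (hdisj n).ne_of_mem (mem_image_of_mem f hxK) (mem_image_of_mem f hyL) hxy

lemma exists_mem_ae_injOn_of_almostSeparates [LinearOrder α] [OrderClosedTopology α]
    [DenselyOrdered α] {μ : Measure α} {f : α → β} {ι : Type*} [Countable ι] {d : ι → α}
    (hd : DenseRange d)
    (h : ∀ i (n : ℕ), AlmostSeparates μ f (Iic (d i)) (Ici (d i)) (2⁻¹ ^ n)) :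
    ∃ s ∈ ae μ, InjOn f s := by
  choose s hs hne using fun i => exists_mem_ae_forall_ne_of_almostSeparates (h i)
  have hlt : ∀ x ∈ ⋂ i, s i, ∀ y ∈ ⋂ i, s i, x < y → f x ≠ f y := fun x hx y hy hxy => by
    obtain ⟨_, ⟨i, rfl⟩, hxi, hiy⟩ := hd.exists_between hxy
    exact hne i x (mem_iInter.1 hx i) hxi.not_ge y (mem_iInter.1 hy i) hiy.not_ge
  refine ⟨⋂ i, s i, countable_iInter_mem.2 hs, fun x hx y hy hxy => ?_⟩
  by_contra hxy'
  rcases lt_or_gt_of_ne hxy' with hlt' | hgt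
  · exact hlt x hx y hy hlt' hxy
  · exact hlt y hy x hx hgt hxy.symm

end AlmostSeparates

section Piecewise

variable {α β : Type*} [MeasurableSpace α] [MeasurableSpace β] {μ : Measure α} {s : Set α}
  [∀ x, Decidable (x ∈ s)] {f g : α → β}

lemma map_piecewise (hs : MeasurableSet s) (hf : Measurable f) (hg : Measurable g) :
    μ.map (s.piecewise f g) = (μ.restrict s).map f + (μ.restrict sᶜ).map g := by
  rw [← Measure.map_congr (piecewise_ae_eq_restrict hs),
    ← Measure.map_congr (piecewise_ae_eq_restrict_compl hs),
    ← Measure.map_add _ _ (hf.piecewise hs hg), Measure.restrict_add_restrict_compl hs]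

lemma measure_symmDiff_preimage_piecewise_le (hf : Measurable f) (hg : Measurable g)
    {A : Set β} (hA : MeasurableSet A) :
    μ (s ∆ (s.piecewise f g ⁻¹' A)) ≤ (μ.restrict s).map f Aᶜ + (μ.restrict sᶜ).map g A := by
  have hsub : s ∆ (s.piecewise f g ⁻¹' A) ⊆ (f ⁻¹' Aᶜ ∩ s) ∪ (g ⁻¹' A ∩ sᶜ) := by
    intro x hx
    by_cases hxs : x ∈ s <;> simpa [mem_symmDiff, hxs] using hx
  rw [Measure.map_apply hf hA.compl, Measure.map_apply hg hA,
    Measure.restrict_apply (hf hA.compl), Measure.restrict_apply (hg hA)]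
  exact (measure_mono hsub).trans (measure_union_le _ _)

end Piecewise

theorem exists_almostSeparates_dist_le (f : CLam) (t : I) {h : ℝ} (hh : 0 < h) {ε : ℝ≥0∞}
    (hε : ε ≠ 0) : ∃ g : CLam, dist g f ≤ h ∧ AlmostSeparates volume g.1 (Iic t) (Ici t) ε := by
  classical
  have hfm : Measurable f.1 := f.2.measurable
  have hhalves : (volume.restrict (Iic t)).map f.1 + (volume.restrict (Iic t)ᶜ).map f.1 =
      volume := by
    rw [← Measure.map_add _ _ hfm, Measure.restrict_add_restrict_compl measurableSet_Iic,
      f.2.map_eq]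
  obtain ⟨δ, hδ0, hδε⟩ := exists_between (pos_iff_ne_zero.2 hε)
  obtain ⟨φ, ψ, hφc, hψc, hφh, hψh, hct, hmap, A, hA, hφA, hψA⟩ :=
    exists_near_id_map_add_map_eq_volume hhalves (f.1 t) hh (ENNReal.half_pos hδ0.ne').ne'
  rw [Measure.map_map hφc.measurable hfm] at hmap hφA
  rw [Measure.map_map hψc.measurable hfm] at hmap hψA
  have hφf : Continuous (φ ∘ f.1) := hφc.comp f.1.continuous
  have hψf : Continuous (ψ ∘ f.1) := hψc.comp f.1.continuous
  have hgc : Continuous ((Iic t).piecewise (φ ∘ f.1) (ψ ∘ f.1)) :=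
    hφf.piecewise (fun x hx => by rw [frontier_Iic_subset t hx]; exact hct) hψf
  have hgmp : MeasurePreserving ((Iic t).piecewise (φ ∘ f.1) (ψ ∘ f.1)) volume volume :=
    ⟨hgc.measurable, by rw [map_piecewise measurableSet_Iic hφf.measurable hψf.measurable, hmap]⟩
  refine ⟨⟨⟨_, hgc⟩, hgmp⟩, (ContinuousMap.dist_le hh.le).2 fun x => ?_,
    almostSeparates_of_measure_symmDiff_lt hgmp hgc isClosed_Iic isClosed_Ici
      (compl_Iic.trans_subset Ioi_subset_Ici_self) hA ?_⟩
  · by_cases hx : x ∈ Iic t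
    · simpa [piecewise, hx] using hφh (f.1 x)
    · simpa [piecewise, hx] using hψh (f.1 x)
  · calc _ ≤ δ / 2 + δ / 2 := (measure_symmDiff_preimage_piecewise_le hφf.measurable
            hψf.measurable hA).trans (add_le_add hφA hψA)
      _ < ε := by rwa [ENNReal.add_halves]

lemma isClosed_setOf_measurePreserving {X Y : Type*} [TopologicalSpace X] [CompactSpace X]
    [MeasurableSpace X] [BorelSpace X] [PseudoMetricSpace Y] [MeasurableSpace Y] [BorelSpace Y]
    (μ : Measure X) (ν : Measure Y) [IsFiniteMeasure μ] [IsFiniteMeasure ν] :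
    IsClosed {f : C(X, Y) | MeasurePreserving f μ ν} := by
  have hiff : ∀ f : C(X, Y), MeasurePreserving f μ ν ↔
      ∀ u : BoundedContinuousFunction Y ℝ, ∫ x, u (f x) ∂μ = ∫ y, u y ∂ν := fun f => by
    have hfm : Measurable f := f.continuous.measurable
    have hmap : ∀ u : BoundedContinuousFunction Y ℝ, ∫ y, u y ∂μ.map f = ∫ x, u (f x) ∂μ :=
      fun u => integral_map hfm.aemeasurable u.continuous.aestronglyMeasurable
    have : IsFiniteMeasure (μ.map f) := Measure.isFiniteMeasure_map μ f
    refine ⟨fun hf u => by rw [← hmap, hf.map_eq], fun hu => ⟨hfm, ?_⟩⟩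
    exact ext_of_forall_integral_eq_of_IsFiniteMeasure fun u => (hmap u).trans (hu u)
  simp only [hiff, ofPred_forall]
  refine isClosed_iInter fun u => isClosed_eq ?_ continuous_const
  exact continuous_of_dominated (bound := fun _ => ‖u‖)
    (fun f => (u.continuous.comp f.continuous).aestronglyMeasurable)
    (fun f => .of_forall fun x => u.norm_coe_le_norm _) (integrable_const _)
    (.of_forall fun x => u.continuous.comp (continuous_eval_const x))

instance : BaireSpace CLam :=
  have : CompleteSpace CLam := (isClosed_setOf_measurePreserving volume volume).completeSpace_coe
  inferInstance

section InjOn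

variable {α : Type*} [MeasurableSpace α] {μ : Measure α} {f : α → α}

lemma exists_subset_mapsTo_of_mem_ae (hf : MeasurePreserving f μ μ) {s : Set α} (hs : s ∈ ae μ) :
    ∃ Y ⊆ s, MeasurableSet Y ∧ μ Yᶜ = 0 ∧ MapsTo f Y Y := by
  obtain ⟨s', hs', hs'm, hs's⟩ := Filter.Eventually.exists_measurable_mem hs
  refine ⟨⋂ n : ℕ, f^[n] ⁻¹' s', fun x hx => hs's x (mem_iInter.1 hx 0),
    .iInter fun n => (hf.iterate n).measurable hs'm, ?_, fun x hx => mem_iInter.2 fun n => ?_⟩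
  · rw [compl_iInter, measure_iUnion_null_iff]
    exact fun n => (hf.iterate n).quasiMeasurePreserving.preimage_null hs'
  · simpa only [mem_preimage, Function.iterate_succ_apply] using mem_iInter.1 hx (n + 1)

variable [StandardBorelSpace α]

lemma measurableSet_image_and_measure_compl_image_eq_zero {β : Type*} [MeasurableSpace β]
    [MeasurableSpace.CountablySeparated β] {ν : Measure β} {f : α → β}
    (hf : MeasurePreserving f μ ν) {s : Set α} (hs : MeasurableSet s) (hs0 : μ sᶜ = 0)
    (hinj : InjOn f s) : MeasurableSet (f '' s) ∧ ν (f '' s)ᶜ = 0 := by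
  have himage := hs.image_of_measurable_injOn hf.measurable hinj
  refine ⟨himage, ?_⟩
  rw [← hf.measure_preimage himage.compl.nullMeasurableSet, preimage_compl]
  exact measure_mono_null (compl_subset_compl.2 (subset_preimage_image f s)) hs0

theorem exists_bijOn_of_injOn (hf : MeasurePreserving f μ μ) {s : Set α} (hs : s ∈ ae μ)
    (hinj : InjOn f s) : ∃ X, MeasurableSet X ∧ μ Xᶜ = 0 ∧ BijOn f X X := by
  obtain ⟨Y, hYs, hYm, hY0, hYmaps⟩ := exists_subset_mapsTo_of_mem_ae hf hs
  have hYinj : InjOn f Y := hinj.mono hYs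
  have hsub : ∀ n, f^[n] '' Y ⊆ Y := fun n => (hYmaps.iterate n).image_subset
  have himage : ∀ n, MeasurableSet (f^[n] '' Y) ∧ μ (f^[n] '' Y)ᶜ = 0 := fun n =>
    measurableSet_image_and_measure_compl_image_eq_zero (hf.iterate n) hYm hY0
      (hYinj.iterate hYmaps n)
  have hanti : Antitone fun n => f^[n] '' Y := antitone_nat_of_succ_le fun n => by
    rw [Function.iterate_succ, image_comp]
    exact image_mono hYmaps.image_subset
  have hfX : f '' ⋂ n, f^[n] '' Y = ⋂ n, f^[n] '' Y := by
    rw [(hYinj.mono (iUnion_subset hsub)).image_iInter_eq]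
    simp only [← image_comp, ← Function.iterate_succ']
    exact hanti.iInf_nat_add 1
  refine ⟨⋂ n, f^[n] '' Y, .iInter fun n => (himage n).1, ?_, ?_⟩
  · rw [compl_iInter, measure_iUnion_null_iff]
    exact fun n => (himage n).2
  · have hXY : ⋂ n, f^[n] '' Y ⊆ Y := iInter_subset_of_subset 0 (hsub 0)
    simpa only [hfX] using (hYinj.mono hXY).bijOn_image

end InjOn

/-- There is a dense `G_δ` subset `Q` of `C_λ` such that for each `f ∈ Q` there exists a
set `X_f ⊆ I` of Lebesgue measure `1` on which `f` is a bijection, with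
`λ(M) = λ(M ∩ X_f) = λ(f⁻¹(M ∩ X_f))` for every Borel set `M ⊆ I`. -/
theorem stmt13 :
    ∃ Q : Set CLam, IsGδ Q ∧ Dense Q ∧
      ∀ f ∈ Q, ∃ X : Set unitInterval, volume X = 1 ∧
        Set.BijOn f.1 X X ∧
        ∀ M : Set unitInterval, MeasurableSet M →
          volume M = volume (M ∩ X) ∧ volume M = volume (⇑f.1 ⁻¹' (M ∩ X)) := by
  obtain ⟨d, hd⟩ := TopologicalSpace.exists_dense_seq I
  let U : ℕ × ℕ → Set CLam := fun p =>
    {f | AlmostSeparates volume f.1 (Iic (d p.1)) (Ici (d p.1)) (2⁻¹ ^ p.2)}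
  have hUo : ∀ p, IsOpen (U p) := fun p =>
    (isOpen_setOf_almostSeparates volume _ _ _).preimage continuous_subtype_val
  have hUd : ∀ p, Dense (U p) := fun p => Metric.dense_iff.2 fun f r hr => by
    obtain ⟨g, hgf, hg⟩ := exists_almostSeparates_dist_le f (d p.1) (half_pos hr)
      (ε := 2⁻¹ ^ p.2) (by simp)
    exact ⟨g, Metric.mem_ball.2 (hgf.trans_lt (half_lt_self hr)), hg⟩
  refine ⟨⋂ p, U p, .iInter_of_isOpen hUo, dense_iInter_of_isOpen hUo hUd, fun f hf => ?_⟩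
  obtain ⟨s, hs, hinj⟩ := exists_mem_ae_injOn_of_almostSeparates hd
    fun i n => mem_iInter.1 hf (i, n)
  obtain ⟨X, hXm, hX0, hbij⟩ := exists_bijOn_of_injOn f.2 hs hinj
  have hconull : ∀ M, volume (M ∩ X) = volume M := fun M => measure_inter_conull hX0
  refine ⟨X, (prob_compl_eq_zero_iff hXm).1 hX0, hbij, fun M hM => ⟨(hconull M).symm, ?_⟩⟩
  rw [f.2.measure_preimage (hM.inter hXm).nullMeasurableSet, hconull]
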